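/- arXiv:1410.2229 — 7 statements merged into one kernel-verified Lean document; each statement's English description precedes it below -/
import Mathlib

section
/- Let L ≥ 1 be a natural number, t > 0 a real number, and W : {1,…,L} → ℝ with W_i ≥ 0 for all i. Let u : {0,1,…,L+1} → ℝ satisfy u_0 = 0, u_{L+1} = 0, and the discrete inequality -t(u_{i+1} + u_{i-1} - 2u_i) + W_i u_i ≥ 0 for every i = 1,…,L. Then u_i ≥ 0 for all i = 0,…,L+1. -/
/-- Maximum principle for the discrete Schrödinger operator `-tΔ_D + W` with
Dirichlet boundary conditions: if `(-tΔ_D + W)u ≥ 0` at every interior site,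
then `u ≥ 0` everywhere. -/
theorem discrete_maximum_principle_nonneg
    (L : ℕ) (hL : 1 ≤ L) (t : ℝ) (ht : 0 < t) (W u : ℕ → ℝ)
    (hW : ∀ i ∈ Finset.Icc 1 L, 0 ≤ W i)
    (hu0 : u 0 = 0) (huL : u (L + 1) = 0)
    (hineq : ∀ i ∈ Finset.Icc 1 L,
      0 ≤ -t * (u (i + 1) + u (i - 1) - 2 * u i) + W i * u i) :
    ∀ i ∈ Finset.Icc 0 (L + 1), 0 ≤ u i := by
  obtain ⟨m, hm, hmin⟩ := Finset.exists_min_image (Finset.Icc 0 (L + 1)) u ⟨0, by simp⟩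
  suffices h : 0 ≤ u m from fun i hi => h.trans (hmin i hi)
  by_contra! hneg
  -- A negative minimum propagates to the left, down to the boundary site `0`.
  have hne : ∀ j ≤ L + 1, u j ≠ u m := by
    intro j
    induction j with
    | zero => intro _ h; linarith
    | succ j ih =>
      intro hj h
      rcases hj.eq_or_lt with hj' | hj'
      · rw [hj', huL] at h; linarith
      · have hmem : j + 1 ∈ Finset.Icc 1 L := Finset.mem_Icc.mpr ⟨by omega, by omega⟩
        have hsuper := hineq (j + 1) hmem
        rw [Nat.add_sub_cancel, h] at hsuper
        have hpot : W (j + 1) * u m ≤ 0 := mul_nonpos_of_nonneg_of_nonpos (hW _ hmem) hneg.le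
        have hlap : u (j + 1 + 1) + u j - 2 * u m ≤ 0 := by
          by_contra! hpos
          nlinarith [mul_pos ht hpos]
        have hleft := hmin j (Finset.mem_Icc.mpr ⟨by omega, by omega⟩)
        have hright := hmin (j + 1 + 1) (Finset.mem_Icc.mpr ⟨by omega, by omega⟩)
        exact ih (by omega) (by linarith)
  exact hne m (Finset.mem_Icc.mp hm).2 rfl
end

section
/- Let L ≥ 1 be a natural number, t > 0 a real number, and W : {1,…,L} → ℝ with W_i ≥ 0 for all i. Let u : {0,1,…,L+1} → ℝ satisfy u_0 = 0, u_{L+1} = 0, and -t(u_{i+1} + u_{i-1} - 2u_i) + W_i u_i ≥ 0 for every i = 1,…,L. If moreover there exists an index i_0 ∈ {1,…,L} with -t(u_{i_0+1} + u_{i_0-1} - 2u_{i_0}) + W_{i_0} u_{i_0} > 0, then u_i > 0 for all i = 1,…,L. -/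
/-- At an interior site where `(-tΔ + w)u ≥ 0` and the central value `b` is nonpositive and at most
both neighbouring values `a` and `c`, the three values coincide. -/
theorem neighbors_eq_of_nonpos_min {t w a b c : ℝ} (ht : 0 < t) (hw : 0 ≤ w) (hb : b ≤ 0)
    (hba : b ≤ a) (hbc : b ≤ c) (h : 0 ≤ -t * (c + a - 2 * b) + w * b) :
    a = b ∧ c = b := by
  have hwb : w * b ≤ 0 := mul_nonpos_of_nonneg_of_nonpos hw hb
  have hsum : c + a - 2 * b ≤ 0 := by
    by_contra! hpos
    nlinarith [mul_pos ht hpos]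
  constructor <;> linarith

/-- Strong maximum principle for the discrete Schrödinger operator `-tΔ_D + W`
with Dirichlet boundary conditions: if `(-tΔ_D + W)u ≥ 0` at every interior
site and `(-tΔ_D + W)u > 0` at some interior site, then `u > 0` at every
interior site. -/
theorem discrete_maximum_principle_pos
    (L : ℕ) (hL : 1 ≤ L) (t : ℝ) (ht : 0 < t) (W u : ℕ → ℝ)
    (hW : ∀ i ∈ Finset.Icc 1 L, 0 ≤ W i)
    (hu0 : u 0 = 0) (huL : u (L + 1) = 0)
    (hineq : ∀ i ∈ Finset.Icc 1 L,
      0 ≤ -t * (u (i + 1) + u (i - 1) - 2 * u i) + W i * u i)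
    (hstrict : ∃ i₀ ∈ Finset.Icc 1 L,
      0 < -t * (u (i₀ + 1) + u (i₀ - 1) - 2 * u i₀) + W i₀ * u i₀) :
    ∀ i ∈ Finset.Icc 1 L, 0 < u i := by
  intro i hi
  by_contra! hui
  obtain ⟨j, hj, hjnonpos, hjmin⟩ :
      ∃ j ∈ Finset.Icc 1 L, u j ≤ 0 ∧ ∀ k ≤ L + 1, u j ≤ u k := by
    obtain ⟨j, hj, hjmin⟩ := Finset.exists_min_image (Finset.Icc 1 L) u ⟨i, hi⟩
    have hj0 : u j ≤ 0 := (hjmin i hi).trans hui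
    refine ⟨j, hj, hj0, fun k hk => ?_⟩
    rcases Nat.eq_zero_or_pos k with rfl | hk0
    · rwa [hu0]
    · rcases hk.eq_or_lt with rfl | hkL
      · rwa [huL]
      · exact hjmin k (Finset.mem_Icc.2 ⟨hk0, Nat.lt_succ_iff.1 hkL⟩)
  have hstep : ∀ k ∈ Finset.Icc 1 L, u k = u j → u (k - 1) = u j ∧ u (k + 1) = u j := by
    intro k hk hkj
    have hkL := (Finset.mem_Icc.1 hk).2
    rw [← hkj] at hjnonpos hjmin ⊢
    exact neighbors_eq_of_nonpos_min ht (hW k hk) hjnonpos (hjmin _ (by omega))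
      (hjmin _ (by omega)) (hineq k hk)
  rw [Finset.mem_Icc] at hj
  have hup : ∀ n, j ≤ n → n ≤ L → u n = u j := by
    intro n hn
    induction n, hn using Nat.le_induction with
    | base => exact fun _ => rfl
    | succ n hn ih =>
      intro hnL
      exact (hstep n (Finset.mem_Icc.2 ⟨by omega, by omega⟩) (ih (by omega))).2
  have hdown : ∀ d < j, u (j - d) = u j := by
    intro d
    induction d with
    | zero => exact fun _ => rfl
    | succ d ih =>
      intro hd
      exact (hstep (j - d) (Finset.mem_Icc.2 ⟨by omega, by omega⟩) (ih (by omega))).1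
  obtain ⟨k, hk, hpos⟩ := hstrict
  have hkj : u k = u j := by
    obtain ⟨hk1, hkL⟩ := Finset.mem_Icc.1 hk
    rcases le_total j k with hjk | hkj
    · exact hup k hjk hkL
    · simpa [Nat.sub_sub_self hkj] using hdown (j - k) (by omega)
  obtain ⟨hprev, hnext⟩ := hstep k hk hkj
  rw [hprev, hnext, hkj] at hpos
  linarith [mul_nonpos_of_nonneg_of_nonpos (hW k hk) hjnonpos]
end

section
/- Let L ≥ 1 be a natural number, t > 0 a real number, and W : {1,…,L} → ℝ with W_i ≥ 0 for all i. Let A be the L×L tridiagonal matrix with A_{ii} = 2t + W_i, A_{i,i-1} = A_{i-1,i} = -t, and all other entries zero. Then every entry of the inverse matrix A⁻¹ is strictly positive: (A⁻¹)_{jk} > 0 for all j,k ∈ {1,…,L}. -/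
/-- Strong minimum principle on a discrete interval: a supersolution with zero boundary values
that is nonpositive at some interior point vanishes identically. -/
lemma eq_zero_of_discrete_supersolution {L : ℕ} {t : ℝ} (ht : 0 < t) {w u : ℕ → ℝ}
    (hw : ∀ p < L, 0 ≤ w p) (h₀ : u 0 = 0) (h₁ : u (L + 1) = 0)
    (hu : ∀ p < L, t * u p + t * u (p + 2) ≤ (2 * t + w p) * u (p + 1))
    {q : ℕ} (hq : q < L) (hq₀ : u (q + 1) ≤ 0) {i : ℕ} (hi : i ≤ L) : u (i + 1) = 0 := by
  obtain ⟨p, hp, hmin⟩ := (Finset.range L).exists_min_image (fun n => u (n + 1))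
    ⟨q, Finset.mem_range.2 hq⟩
  simp only [Finset.mem_range] at hp hmin
  generalize hm : u (p + 1) = m at hmin
  have hm₀ : m ≤ 0 := (hmin q hq).trans hq₀
  have hle : ∀ n ≤ L + 1, m ≤ u n := by
    intro n hn
    rcases n with _ | n
    · rwa [h₀]
    · rcases (Nat.le_of_succ_le_succ hn).lt_or_eq with h | rfl
      · exact hmin n h
      · rwa [h₁]
  have hstep : ∀ n < L, u (n + 1) = m → u n = m ∧ u (n + 2) = m := by
    intro n hn hnm
    have hsuper := hu n hn
    rw [hnm] at hsuper
    have hwm : w n * m ≤ 0 := mul_nonpos_of_nonneg_of_nonpos (hw n hn) hm₀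
    have hl := hle n (by omega)
    have hr := hle (n + 2) (by omega)
    constructor <;> nlinarith
  have hleft : ∀ n < L, u (n + 1) = m → u 0 = m ∧ u 1 = m := by
    intro n
    induction n with
    | zero => exact fun hn hnm => ⟨(hstep 0 hn hnm).1, hnm⟩
    | succ n ih => exact fun hn hnm => ih (by omega) (hstep (n + 1) hn hnm).1
  obtain ⟨hm0, hm1⟩ := hleft p hp hm
  have hright : ∀ n ≤ L, u (n + 1) = m := by
    intro n
    induction n with
    | zero => exact fun _ => hm1
    | succ n ih => exact fun hn => (hstep n hn (ih (by omega))).2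
  rw [hright i hi, ← hm0, h₀]

/-- The extension by zero of `v`, shifted by one so that the boundary points are `0` and `L + 1`. -/
def dirichletExtension {L : ℕ} (v : Fin L → ℝ) (n : ℕ) : ℝ :=
  ∑ j : Fin L, if (j : ℕ) + 1 = n then v j else 0

lemma dirichletExtension_zero {L : ℕ} (v : Fin L → ℝ) : dirichletExtension v 0 = 0 := by
  simp [dirichletExtension]

lemma dirichletExtension_last {L : ℕ} (v : Fin L → ℝ) : dirichletExtension v (L + 1) = 0 :=
  Finset.sum_eq_zero fun j _ => if_neg (by omega)

lemma dirichletExtension_succ {L : ℕ} (v : Fin L → ℝ) (i : Fin L) :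
    dirichletExtension v (i + 1) = v i := by
  simp [dirichletExtension, Fin.val_inj]

/-- The matrix of the discrete Dirichlet Schrödinger operator `-tΔ_D + W`. -/
def schrodingerMatrix {L : ℕ} (t : ℝ) (W : Fin L → ℝ) : Matrix (Fin L) (Fin L) ℝ :=
  Matrix.of fun i j =>
    if (i : ℕ) = (j : ℕ) then 2 * t + W i
    else if (i : ℕ) + 1 = (j : ℕ) ∨ (j : ℕ) + 1 = (i : ℕ) then -t
    else 0

lemma schrodingerMatrix_mulVec {L : ℕ} (t : ℝ) (W v : Fin L → ℝ) (i : Fin L) :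
    (schrodingerMatrix t W).mulVec v i = (2 * t + W i) * dirichletExtension v (i + 1)
      - t * dirichletExtension v i - t * dirichletExtension v (i + 2) := by
  simp only [Matrix.mulVec, dotProduct, dirichletExtension, Finset.mul_sum,
    ← Finset.sum_sub_distrib]
  refine Finset.sum_congr rfl fun j _ => ?_
  simp only [schrodingerMatrix, Matrix.of_apply]
  split_ifs <;> first | omega | ring

/-- Strong minimum principle for the matrix of `-tΔ_D + W`. -/
lemma schrodingerMatrix_eq_zero_or_pos {L : ℕ} {t : ℝ} {W v : Fin L → ℝ} (ht : 0 < t)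
    (hW : ∀ i, 0 ≤ W i) (hv : ∀ i, 0 ≤ (schrodingerMatrix t W).mulVec v i) :
    v = 0 ∨ ∀ i, 0 < v i := by
  by_contra! h
  obtain ⟨hne, q, hq⟩ := h
  refine hne (funext fun i => ?_)
  rw [← dirichletExtension_succ v i]
  refine eq_zero_of_discrete_supersolution (L := L) ht
    (w := fun n => if h : n < L then W ⟨n, h⟩ else 0) (fun p hp => by simp [hp, hW])
    (dirichletExtension_zero v) (dirichletExtension_last v) (fun p hp => ?_) q.isLt
    (by rwa [dirichletExtension_succ]) i.isLt.le
  have hvp := hv ⟨p, hp⟩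
  rw [schrodingerMatrix_mulVec] at hvp
  simp only [hp, dite_true]
  linarith

lemma isUnit_det_schrodingerMatrix {L : ℕ} {t : ℝ} {W : Fin L → ℝ} (ht : 0 < t)
    (hW : ∀ i, 0 ≤ W i) : IsUnit (schrodingerMatrix t W).det := by
  rw [isUnit_iff_ne_zero]
  intro hdet
  obtain ⟨v, hv, hAv⟩ := Matrix.exists_mulVec_eq_zero_iff.2 hdet
  have hpos := (schrodingerMatrix_eq_zero_or_pos ht hW (v := v) (by simp [hAv])).resolve_left hv
  have hneg := (schrodingerMatrix_eq_zero_or_pos ht hW (v := -v)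
    (by simp [Matrix.mulVec_neg, hAv])).resolve_left (neg_ne_zero.2 hv)
  obtain ⟨i, -⟩ := Function.ne_iff.1 hv
  exact (neg_pos.1 (hneg i)).not_gt (hpos i)

/-- Positivity of the discrete Green function: every entry of the inverse of
the tridiagonal matrix of the discrete Dirichlet Schrödinger operator
`-tΔ_D + W` is strictly positive. -/
theorem tridiagonal_schrodinger_matrix_inverse_pos
    (L : ℕ) (hL : 1 ≤ L) (t : ℝ) (ht : 0 < t) (W : Fin L → ℝ)
    (hW : ∀ i, 0 ≤ W i)
    (A : Matrix (Fin L) (Fin L) ℝ)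
    (hA : ∀ i j : Fin L, A i j =
      if (i : ℕ) = (j : ℕ) then 2 * t + W i
      else if (i : ℕ) + 1 = (j : ℕ) ∨ (j : ℕ) + 1 = (i : ℕ) then -t
      else 0) :
    ∀ j k : Fin L, 0 < A⁻¹ j k := by
  obtain rfl : A = schrodingerMatrix t W := Matrix.ext hA
  intro j k
  set A := schrodingerMatrix t W
  have hcol : A.mulVec (A⁻¹.mulVec (Pi.single k 1)) = Pi.single k 1 := by
    rw [Matrix.mulVec_mulVec, Matrix.mul_nonsing_inv A (isUnit_det_schrodingerMatrix ht hW),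
      Matrix.one_mulVec]
  have hpos : ∀ i, 0 < A⁻¹.mulVec (Pi.single k 1) i := by
    refine (schrodingerMatrix_eq_zero_or_pos ht hW fun i => ?_).resolve_left fun h => ?_
    · rw [hcol]
      exact (Pi.single_nonneg.2 (zero_le_one (α := ℝ)) : (0 : Fin L → ℝ) ≤ Pi.single k 1) i
    · rw [h, Matrix.mulVec_zero] at hcol
      simpa using congrFun hcol k
  simpa using hpos j
end

section
/- Let L ≥ 1 be a natural number, t > 0 a real number, and W : {1,…,L} → ℝ with W_i ≥ 0 for all i. Let ψ : {0,1,…,L+1} → ℝ satisfy ψ_0 = ψ_{L+1} = 0 and the eigenvalue equation -t(ψ_{j+1} + ψ_{j-1} - 2ψ_j) + W_j ψ_j = λ ψ_j for every j = 1,…,L, with ψ not identically zero, and let u : {0,1,…,L+1} → ℝ satisfy u_0 = u_{L+1} = 0 and -t(u_{j+1} + u_{j-1} - 2u_j) + W_j u_j = 1 for every j = 1,…,L. Then for all j = 1,…,L, |ψ_j| / max_{1≤k≤L} |ψ_k| ≤ λ u_j. -/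
/-- Minimum principle for `-tΔ + W` with `W ≥ 0`: a supersolution that is nonnegative at the
two boundary sites is nonnegative everywhere. -/
theorem nonneg_of_schrodinger_nonneg {L : ℕ} {t : ℝ} (ht : 0 < t) {W f : ℕ → ℝ}
    (hW : ∀ i ∈ Finset.Icc 1 L, 0 ≤ W i) (hf0 : 0 ≤ f 0) (hfL : 0 ≤ f (L + 1))
    (hf : ∀ j ∈ Finset.Icc 1 L, 0 ≤ -t * (f (j + 1) + f (j - 1) - 2 * f j) + W j * f j) :
    ∀ j ∈ Finset.Icc 0 (L + 1), 0 ≤ f j := by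
  obtain ⟨m, hm, hmin⟩ := (Finset.Icc 0 (L + 1)).exists_min_image f ⟨0, by simp⟩
  suffices h : 0 ≤ f m from fun j hj => h.trans (hmin j hj)
  by_contra! hneg
  have key : ∀ j ≤ L + 1, f j ≠ f m := by
    intro j
    induction j with
    | zero => intro _ h; linarith
    | succ j ih =>
      intro hj h
      rcases hj.eq_or_lt with hj' | hj'
      · rw [hj'] at h; linarith
      · have hmem : j + 1 ∈ Finset.Icc 1 L := by simp; omega
        have hsuper := hf _ hmem
        have hright := hmin (j + 1 + 1) (by simp; omega)
        have hleft := lt_of_le_of_ne (hmin j (by simp; omega)) (ih (by omega)).symm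
        have hWf := mul_nonpos_of_nonneg_of_nonpos (hW _ hmem) hneg.le
        rw [Nat.add_sub_cancel, h] at hsuper
        have hlap : 0 < t * (f (j + 1 + 1) + f j - 2 * f m) := mul_pos ht (by linarith)
        linarith
  exact key m (by simpa using hm) rfl

/-- Dirichlet eigenvalues of `-tΔ + W` with `W ≥ 0` are nonnegative. -/
theorem schrodinger_eigenvalue_nonneg {L : ℕ} {t : ℝ} (ht : 0 < t) {W ψ : ℕ → ℝ} {lam : ℝ}
    (hW : ∀ i ∈ Finset.Icc 1 L, 0 ≤ W i) (hψ0 : ψ 0 = 0) (hψL : ψ (L + 1) = 0)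
    (heig : ∀ j ∈ Finset.Icc 1 L,
      -t * (ψ (j + 1) + ψ (j - 1) - 2 * ψ j) + W j * ψ j = lam * ψ j)
    (hψne : ∃ j ∈ Finset.Icc 0 (L + 1), ψ j ≠ 0) : 0 ≤ lam := by
  by_contra! hneg
  obtain ⟨j, hj, hne⟩ := hψne
  have hW' : ∀ i ∈ Finset.Icc 1 L, 0 ≤ W i - lam := fun i hi => by linarith [hW i hi]
  have hpos : 0 ≤ ψ j := nonneg_of_schrodinger_nonneg ht hW' hψ0.ge hψL.ge
    (fun k hk => by linarith [heig k hk]) j hj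
  have hnonpos : 0 ≤ -ψ j := nonneg_of_schrodinger_nonneg (f := fun k => -ψ k) ht hW'
    (by simp [hψ0]) (by simp [hψL]) (fun k hk => by linarith [heig k hk]) j hj
  exact hne (by linarith)

/-- First control inequality in the discrete case: if `(λ, ψ)` is a Dirichlet
eigenpair of `-tΔ_D + W` with `ψ` not identically zero and `u` is the landscape
function (the Dirichlet solution of `(-tΔ_D + W)u = 1`), then
`|ψⱼ| / max_k |ψ_k| ≤ λ uⱼ` at every interior site. -/
theorem discrete_landscape_inequality
    (L : ℕ) (hL : 1 ≤ L) (t : ℝ) (ht : 0 < t) (W ψ u : ℕ → ℝ) (lam : ℝ)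
    (hW : ∀ i ∈ Finset.Icc 1 L, 0 ≤ W i)
    (hψ0 : ψ 0 = 0) (hψL : ψ (L + 1) = 0)
    (heig : ∀ j ∈ Finset.Icc 1 L,
      -t * (ψ (j + 1) + ψ (j - 1) - 2 * ψ j) + W j * ψ j = lam * ψ j)
    (hψne : ∃ j ∈ Finset.Icc 0 (L + 1), ψ j ≠ 0)
    (hu0 : u 0 = 0) (huL : u (L + 1) = 0)
    (hland : ∀ j ∈ Finset.Icc 1 L,
      -t * (u (j + 1) + u (j - 1) - 2 * u j) + W j * u j = 1) :
    ∀ j ∈ Finset.Icc 1 L,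
      |ψ j| / (Finset.Icc 1 L).sup' (Finset.nonempty_Icc.mpr hL)
          (fun k => |ψ k|) ≤ lam * u j := by
  have hlam := schrodinger_eigenvalue_nonneg ht hW hψ0 hψL heig hψne
  set M := (Finset.Icc 1 L).sup' (Finset.nonempty_Icc.mpr hL) (fun k => |ψ k|)
  have hM : ∀ k ∈ Finset.Icc 1 L, |ψ k| ≤ M := fun k hk =>
    Finset.le_sup' (fun k => |ψ k|) hk
  have hMpos : 0 < M := by
    obtain ⟨k, hk, hne⟩ := hψne
    have hk0 : k ≠ 0 := fun h => hne (h ▸ hψ0)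
    have hkL : k ≠ L + 1 := fun h => hne (h ▸ hψL)
    rw [Finset.mem_Icc] at hk
    exact (abs_pos.mpr hne).trans_le (hM k (Finset.mem_Icc.mpr (by omega)))
  intro j hj
  have hj' : j ∈ Finset.Icc 0 (L + 1) := by
    rw [Finset.mem_Icc] at hj ⊢
    omega
  have hupper : 0 ≤ lam * M * u j - ψ j :=
    nonneg_of_schrodinger_nonneg (f := fun k => lam * M * u k - ψ k) ht hW
      (by simp [hψ0, hu0]) (by simp [hψL, huL]) (fun k hk => by
        have := mul_nonneg hlam (sub_nonneg.mpr ((le_abs_self _).trans (hM k hk)))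
        linear_combination this - lam * M * hland k hk + heig k hk) j hj'
  have hlower : 0 ≤ lam * M * u j + ψ j :=
    nonneg_of_schrodinger_nonneg (f := fun k => lam * M * u k + ψ k) ht hW
      (by simp [hψ0, hu0]) (by simp [hψL, huL]) (fun k hk => by
        have := mul_nonneg hlam (sub_nonneg.mpr ((neg_le_abs _).trans (hM k hk)))
        linear_combination this - lam * M * hland k hk - heig k hk) j hj'
  rw [div_le_iff₀ hMpos, abs_le]
  constructor <;> linarith
end

section
/- Let L ≥ 1 be a natural number, t > 0 a real number, and W : {1,…,L} → ℝ with W_i ≥ 0 for all i. Let ψ : {0,1,…,L+1} → ℝ satisfy ψ_0 = ψ_{L+1} = 0 and -t(ψ_{j+1} + ψ_{j-1} - 2ψ_j) + W_j ψ_j = λ ψ_j for every j = 1,…,L, and let u : {0,1,…,L+1} → ℝ satisfy u_0 = u_{L+1} = 0 and -t(u_{j+1} + u_{j-1} - 2u_j) + W_j u_j = 1 for every j = 1,…,L. Then ψ_j ≤ λ · (max_{1≤k≤L} |ψ_k|) · u_j for all j = 1,…,L. -/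
/-- Discrete maximum principle: a supersolution of `-tΔ + W` on `{1, …, L}`, with `W ≥ 0`, that is
nonnegative at the two boundary sites is nonnegative everywhere. -/
theorem nonneg_of_discrete_supersolution {L : ℕ} {t : ℝ} (ht : 0 < t) {W v : ℕ → ℝ}
    (hW : ∀ i ∈ Finset.Icc 1 L, 0 ≤ W i) (hv0 : 0 ≤ v 0) (hvL : 0 ≤ v (L + 1))
    (hv : ∀ j ∈ Finset.Icc 1 L,
      0 ≤ -t * (v (j + 1) + v (j - 1) - 2 * v j) + W j * v j) :
    ∀ j ∈ Finset.Icc 1 L, 0 ≤ v j := by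
  classical
  have hex : ∃ m, m ≤ L + 1 ∧ ∀ k ≤ L + 1, v m ≤ v k := by
    obtain ⟨m, hm, hmin⟩ := (Finset.range (L + 2)).exists_min_image v ⟨0, by simp⟩
    exact ⟨m, Nat.lt_succ_iff.mp (Finset.mem_range.mp hm),
      fun k hk => hmin k (Finset.mem_range.mpr (by lia))⟩
  -- The leftmost minimizer is strictly below its left neighbour.
  obtain ⟨hm, hmin⟩ := Nat.find_spec hex
  have hfirst : ∀ k < Nat.find hex, ¬ (k ≤ L + 1 ∧ ∀ l ≤ L + 1, v k ≤ v l) :=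
    fun k hk => Nat.find_min hex hk
  generalize Nat.find hex = m at hm hmin hfirst
  suffices hvm : 0 ≤ v m from
    fun j hj => hvm.trans (hmin j (by have := Finset.mem_Icc.mp hj; lia))
  by_contra! hneg
  have hm0 : m ≠ 0 := by rintro rfl; linarith
  have hmL : m ≠ L + 1 := by rintro rfl; linarith
  have hmem : m ∈ Finset.Icc 1 L := Finset.mem_Icc.mpr ⟨by lia, by lia⟩
  have hleft : v m < v (m - 1) := by
    by_contra! h
    exact hfirst (m - 1) (by lia) ⟨by lia, fun l hl => h.trans (hmin l hl)⟩
  have hright : v m ≤ v (m + 1) := hmin _ (by lia)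
  have hlap : 0 < t * (v (m + 1) + v (m - 1) - 2 * v m) := mul_pos ht (by linarith)
  have hpot : W m * v m ≤ 0 := mul_nonpos_of_nonneg_of_nonpos (hW m hmem) hneg.le
  linarith [hv m hmem]

/-- Pointwise form of the first control inequality: if `(λ, ψ)` is a Dirichlet
eigenpair of `-tΔ_D + W` and `u` is the landscape function, then
`ψⱼ ≤ λ (max_k |ψ_k|) uⱼ` at every interior site. -/
theorem discrete_landscape_inequality_pointwise
    (L : ℕ) (hL : 1 ≤ L) (t : ℝ) (ht : 0 < t) (W ψ u : ℕ → ℝ) (lam : ℝ)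
    (hW : ∀ i ∈ Finset.Icc 1 L, 0 ≤ W i)
    (hψ0 : ψ 0 = 0) (hψL : ψ (L + 1) = 0)
    (heig : ∀ j ∈ Finset.Icc 1 L,
      -t * (ψ (j + 1) + ψ (j - 1) - 2 * ψ j) + W j * ψ j = lam * ψ j)
    (hu0 : u 0 = 0) (huL : u (L + 1) = 0)
    (hland : ∀ j ∈ Finset.Icc 1 L,
      -t * (u (j + 1) + u (j - 1) - 2 * u j) + W j * u j = 1) :
    ∀ j ∈ Finset.Icc 1 L,
      ψ j ≤ lam * ((Finset.Icc 1 L).sup' (Finset.nonempty_Icc.mpr hL)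
          (fun k => |ψ k|)) * u j := by
  set M := (Finset.Icc 1 L).sup' (Finset.nonempty_Icc.mpr hL) (fun k => |ψ k|) with hM
  have hψM : ∀ j ∈ Finset.Icc 1 L, ψ j ≤ M := fun j hj =>
    (le_abs_self _).trans (Finset.le_sup' (fun k => |ψ k|) hj)
  rcases le_or_gt 0 lam with hlam | hlam
  · intro j hj
    have key := nonneg_of_discrete_supersolution (v := fun k => lam * M * u k - ψ k) ht hW
      (by simp [hu0, hψ0]) (by simp [huL, hψL]) (fun k hk => by
        have hsource : 0 ≤ lam * (M - ψ k) := mul_nonneg hlam (sub_nonneg.mpr (hψM k hk))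
        linear_combination hsource + heig k hk - lam * M * hland k hk) j hj
    exact sub_nonneg.mp key
  · -- The operator is nonnegative, so a negative `lam` forces `ψ = 0`.
    have hW' : ∀ i ∈ Finset.Icc 1 L, 0 ≤ W i - lam := fun i hi => by linarith [hW i hi]
    have hψ : ∀ j ∈ Finset.Icc 1 L, ψ j = 0 := fun j hj => by
      have hnonneg := nonneg_of_discrete_supersolution (v := ψ) ht hW' hψ0.ge hψL.ge
        (fun k hk => by linarith [heig k hk]) j hj
      have hnonpos := nonneg_of_discrete_supersolution (v := fun k => -ψ k) ht hW'
        (by simp [hψ0]) (by simp [hψL]) (fun k hk => by linarith [heig k hk]) j hj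
      linarith
    have hM0 : M = 0 := by
      rw [hM, Finset.sup'_congr _ rfl (g := fun _ => (0 : ℝ)) (fun k hk => by simp [hψ k hk]),
        Finset.sup'_const]
    intro j hj
    simp [hψ j hj, hM0]
end

section
/- Let L ≥ 1 be a natural number, t > 0 a real number, V : {1,…,L} → ℝ, and λ ∈ ℝ. Let ψ : {0,1,…,L+1} → ℝ satisfy ψ_0 = ψ_{L+1} = 0 and -t(ψ_{j+1} + ψ_{j-1}) + V_j ψ_j = λ ψ_j for every j = 1,…,L, with ψ not identically zero, and define the envelope φ_j = (-1)^j ψ_j. Let V_shift ∈ ℝ satisfy V_shift - 2t - V_j ≥ 0 for all j = 1,…,L, and let u* : {0,1,…,L+1} → ℝ satisfy u*_0 = u*_{L+1} = 0 and -t(u*_{j+1} + u*_{j-1} - 2u*_j) + (V_shift - 2t - V_j) u*_j = 1 for every j = 1,…,L. Then for all j = 1,…,L, |φ_j| / max_{1≤k≤L} |φ_k| ≤ (V_shift - λ) u*_j. -/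
/-- Discrete minimum principle: a supersolution of `-tΔ + W` with `t > 0`, `W ≥ 0` which is
nonnegative at both boundary sites is nonnegative. -/
theorem nonneg_of_discrete_supersolution_s10 {L : ℕ} {t : ℝ} (ht : 0 < t) {W w : ℕ → ℝ}
    (hW : ∀ j ∈ Finset.Icc 1 L, 0 ≤ W j) (h0 : 0 ≤ w 0) (hL : 0 ≤ w (L + 1))
    (hw : ∀ j ∈ Finset.Icc 1 L, 0 ≤ -t * (w (j + 1) + w (j - 1) - 2 * w j) + W j * w j) :
    ∀ j ≤ L + 1, 0 ≤ w j := by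
  classical
  have hex : ∃ k, k ≤ L + 1 ∧ ∀ i ≤ L + 1, w k ≤ w i := by
    obtain ⟨k, hk, hmin⟩ := Finset.exists_min_image (Finset.range (L + 2)) w ⟨0, by simp⟩
    exact ⟨k, by grind, fun i hi => hmin i (by grind)⟩
  obtain ⟨hk, hmin⟩ := Nat.find_spec hex
  -- The leftmost minimizer has a strictly larger left neighbour.
  have hleft : ∀ m < Nat.find hex, ∃ i ≤ L + 1, w i < w m := by
    intro m hm
    have := Nat.find_min hex hm
    grind
  generalize Nat.find hex = k at hk hmin hleft
  suffices h : 0 ≤ w k from fun j hj => h.trans (hmin j hj)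
  by_contra! hneg
  have hk0 : k ≠ 0 := by rintro rfl; linarith
  have hkL : k ≠ L + 1 := by rintro rfl; linarith
  have hkmem : k ∈ Finset.Icc 1 L := Finset.mem_Icc.mpr (by omega)
  obtain ⟨i, hi, hilt⟩ := hleft (k - 1) (by omega)
  have hprev : w k < w (k - 1) := (hmin i hi).trans_lt hilt
  have hnext : w k ≤ w (k + 1) := hmin _ (by omega)
  have hpos : 0 < t * (w (k + 1) + w (k - 1) - 2 * w k) := mul_pos ht (by linarith)
  have hWneg : W k * w k ≤ 0 := mul_nonpos_of_nonneg_of_nonpos (hW k hkmem) hneg.le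
  linarith [hw k hkmem]

/-- The envelope of an eigenfunction solves the dual eigenvalue equation. -/
theorem envelope_dual_eigen_equation {t v lam Vshift : ℝ} {ψ φ : ℕ → ℝ} {j : ℕ} (hj : 1 ≤ j)
    (heig : -t * (ψ (j + 1) + ψ (j - 1)) + v * ψ j = lam * ψ j)
    (hφ : ∀ j, φ j = (-1 : ℝ) ^ j * ψ j) :
    -t * (φ (j + 1) + φ (j - 1) - 2 * φ j) + (Vshift - 2 * t - v) * φ j
      = (Vshift - lam) * φ j := by
  obtain ⟨m, rfl⟩ := Nat.exists_eq_add_of_le' hj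
  simp only [Nat.add_sub_cancel, hφ, pow_succ] at heig ⊢
  linear_combination (-1 : ℝ) ^ m * heig

/-- An eigenvalue of `-tΔ + W` with `t > 0`, `W ≥ 0` is nonnegative: evaluate the eigenvalue
equation at a site where `|φ|` is maximal. -/
theorem eigenvalue_nonneg_of_max {t W E a b c : ℝ} (ht : 0 < t) (hW : 0 ≤ W) (ha : a ≠ 0)
    (hb : |b| ≤ |a|) (hc : |c| ≤ |a|) (h : -t * (b + c - 2 * a) + W * a = E * a) : 0 ≤ E := by
  have hmul : ∀ x : ℝ, |x| ≤ |a| → a * x ≤ a ^ 2 := fun x hx => by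
    calc a * x ≤ |a| * |x| := (le_abs_self _).trans (abs_mul a x).le
      _ ≤ |a| * |a| := mul_le_mul_of_nonneg_left hx (abs_nonneg a)
      _ = a ^ 2 := by rw [← sq, sq_abs]
  have ha2 : 0 < a ^ 2 := by positivity
  have hkey : E * a ^ 2 = t * ((a ^ 2 - a * b) + (a ^ 2 - a * c)) + W * a ^ 2 := by
    linear_combination -a * h
  have hnn : 0 ≤ E * a ^ 2 := by
    rw [hkey]
    exact add_nonneg (mul_nonneg ht.le (by linarith [hmul b hb, hmul c hc])) (by positivity)
  exact nonneg_of_mul_nonneg_left hnn ha2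

/-- First control inequality for the dual landscape: if `ψ` is a nontrivial
Dirichlet eigenfunction of `-t(ψ_{j+1} + ψ_{j-1}) + Vⱼψⱼ = λψⱼ`, `φⱼ = (-1)ʲψⱼ`
is its envelope, `V_shift` satisfies `V_shift - 2t - V ≥ 0`, and `u*` is the
dual landscape function, the Dirichlet solution of
`(-tΔ_D + (V_shift - 2t - V))u* = 1`, then
`|φⱼ| / max_k |φ_k| ≤ (V_shift - λ) u*ⱼ` at every interior site. -/
theorem dual_landscape_inequality
    (L : ℕ) (hL : 1 ≤ L) (t : ℝ) (ht : 0 < t) (V : ℕ → ℝ) (lam : ℝ)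
    (ψ φ ustar : ℕ → ℝ)
    (hψ0 : ψ 0 = 0) (hψL : ψ (L + 1) = 0)
    (heig : ∀ j ∈ Finset.Icc 1 L,
      -t * (ψ (j + 1) + ψ (j - 1)) + V j * ψ j = lam * ψ j)
    (hψne : ∃ j ∈ Finset.Icc 0 (L + 1), ψ j ≠ 0)
    (hφ : ∀ j, φ j = (-1 : ℝ) ^ j * ψ j)
    (Vshift : ℝ) (hVs : ∀ j ∈ Finset.Icc 1 L, 0 ≤ Vshift - 2 * t - V j)
    (hu0 : ustar 0 = 0) (huL : ustar (L + 1) = 0)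
    (hland : ∀ j ∈ Finset.Icc 1 L,
      -t * (ustar (j + 1) + ustar (j - 1) - 2 * ustar j)
        + (Vshift - 2 * t - V j) * ustar j = 1) :
    ∀ j ∈ Finset.Icc 1 L,
      |φ j| / (Finset.Icc 1 L).sup' (Finset.nonempty_Icc.mpr hL)
          (fun k => |φ k|) ≤ (Vshift - lam) * ustar j := by
  have hdual : ∀ j ∈ Finset.Icc 1 L,
      -t * (φ (j + 1) + φ (j - 1) - 2 * φ j) + (Vshift - 2 * t - V j) * φ j
        = (Vshift - lam) * φ j := fun j hj =>
    envelope_dual_eigen_equation (Finset.mem_Icc.mp hj).1 (heig j hj) hφ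
  have hφ0 : φ 0 = 0 := by simp [hφ, hψ0]
  have hφL : φ (L + 1) = 0 := by simp [hφ, hψL]
  obtain ⟨k, hk, hkM⟩ := Finset.exists_mem_eq_sup' (Finset.nonempty_Icc.mpr hL) (fun k => |φ k|)
  have hle_int : ∀ i ∈ Finset.Icc 1 L, |φ i| ≤ |φ k| := fun i hi =>
    hkM ▸ Finset.le_sup' (fun k => |φ k|) hi
  rw [hkM]
  have hle : ∀ i ≤ L + 1, |φ i| ≤ |φ k| := by
    intro i hi
    rcases Nat.eq_zero_or_pos i with rfl | hi0
    · simp [hφ0]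
    rcases hi.eq_or_lt with rfl | hiL
    · simp [hφL]
    exact hle_int i (Finset.mem_Icc.mpr (by omega))
  have hk' := Finset.mem_Icc.mp hk
  have hφk : φ k ≠ 0 := by
    intro hzero
    obtain ⟨i, hi, hne⟩ := hψne
    have hi0 : φ i = 0 := by
      simpa [hzero] using hle i (Finset.mem_Icc.mp hi).2
    simp [hφ, hne] at hi0
  have hE : 0 ≤ Vshift - lam :=
    eigenvalue_nonneg_of_max ht (hVs k hk) hφk (hle _ (by omega)) (hle _ (by omega)) (hdual k hk)
  -- Both `±φ` are dominated by `(Vshift - lam) * max |φ| * u*`.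
  have hcomp : ∀ s : ℝ, |s| = 1 → ∀ j ≤ L + 1,
      0 ≤ (Vshift - lam) * |φ k| * ustar j - s * φ j := by
    intro s hs
    refine nonneg_of_discrete_supersolution_s10
      (w := fun j => (Vshift - lam) * |φ k| * ustar j - s * φ j) ht hVs
      (by simp [hu0, hφ0]) (by simp [huL, hφL]) fun j hj => ?_
    have hsφ : s * φ j ≤ |φ k| := by
      calc s * φ j ≤ |s * φ j| := le_abs_self _
        _ = |φ j| := by rw [abs_mul, hs, one_mul]
        _ ≤ |φ k| := hle_int j hj
    have hrhs : 0 ≤ (Vshift - lam) * (|φ k| - s * φ j) := mul_nonneg hE (by linarith)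
    refine hrhs.trans_eq ?_
    linear_combination -((Vshift - lam) * |φ k|) * hland j hj + s * hdual j hj
  intro j hj
  have hjL : j ≤ L + 1 := (Finset.mem_Icc.mp hj).2.trans (Nat.le_succ L)
  rw [div_le_iff₀ (abs_pos.mpr hφk), abs_le]
  constructor
  · linarith [hcomp (-1) (by simp) j hjL]
  · linarith [hcomp 1 (by simp) j hjL]
end

section
/- Let L ≥ 1 be a natural number, t > 0 a real number, and W : {1,…,L} → ℝ with W_i ≥ 0 for all i. Let A be the L×L tridiagonal matrix with A_{ii} = 2t + W_i, A_{i,i-1} = A_{i-1,i} = -t, and all other entries zero. If f : {1,…,L} → ℝ satisfies f_k ≥ 0 for all k and f_{k_0} > 0 for some k_0, then the solution v = A⁻¹ f satisfies v_j > 0 for all j = 1,…,L. -/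
open Matrix

/-- Strong minimum principle: a Dirichlet supersolution of `-tΔ + W` on `{1, …, L}` that is
nonpositive at some interior site vanishes identically. -/
theorem dirichlet_supersolution_eq_zero {L : ℕ} {t : ℝ} (ht : 0 < t) {W u : ℕ → ℝ}
    (hW : ∀ k < L, 0 ≤ W k) (hu_left : u 0 = 0) (hu_right : u (L + 1) = 0)
    (hu : ∀ k < L, 0 ≤ (2 * t + W k) * u (k + 1) - t * u k - t * u (k + 2))
    {j : ℕ} (hj : j < L) (huj : u (j + 1) ≤ 0) : ∀ i ≤ L + 1, u i = 0 := by
  obtain ⟨p, hp, hmin⟩ := Finset.exists_min_image (Finset.range L) (fun k => u (k + 1))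
    ⟨j, Finset.mem_range.2 hj⟩
  rw [Finset.mem_range] at hp
  have hp_nonpos : u (p + 1) ≤ 0 := (hmin j (Finset.mem_range.2 hj)).trans huj
  have hle : ∀ i ≤ L + 1, u (p + 1) ≤ u i := by
    intro i hi
    rcases i with _ | i
    · rwa [hu_left]
    · rcases (Nat.le_of_succ_le_succ hi).lt_or_eq with h | rfl
      · exact hmin i (Finset.mem_range.2 h)
      · rwa [hu_right]
  have hstep : ∀ k < L, u (k + 1) = u (p + 1) → u k = u (p + 1) ∧ u (k + 2) = u (p + 1) := by
    intro k hk hkp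
    have hs := hu k hk
    rw [hkp] at hs
    have hl := hle k (by omega)
    have hr := hle (k + 2) (by omega)
    have hWu := mul_nonpos_of_nonneg_of_nonpos (hW k hk) hp_nonpos
    constructor <;> nlinarith
  have hdown : ∀ k ≤ p, u (k + 1) = u (p + 1) := fun k hk =>
    Nat.decreasingInduction (motive := fun k _ => u (k + 1) = u (p + 1))
      (fun k hk ih => (hstep (k + 1) (by omega) ih).1) rfl hk
  have hzero : u (p + 1) = 0 :=
    (hstep 0 (by omega) (hdown 0 p.zero_le)).1.symm.trans hu_left
  have hpair : ∀ i ≤ L, u i = u (p + 1) ∧ u (i + 1) = u (p + 1) := by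
    intro i
    induction i with
    | zero => exact fun _ => ⟨hu_left.trans hzero.symm, hdown 0 p.zero_le⟩
    | succ i ih => exact fun hi => ⟨(ih (by omega)).2, (hstep i hi (ih (by omega)).2).2⟩
  intro i hi
  rcases i with _ | i
  · exact hu_left
  · exact (hpair i (by omega)).2.trans hzero

/-- Extension of `v` by zero to the lattice, with site `k : Fin L` placed at `k + 1`. -/
def dirichletExtend {L : ℕ} (v : Fin L → ℝ) : ℕ → ℝ
  | 0 => 0
  | k + 1 => if h : k < L then v ⟨k, h⟩ else 0

theorem dirichletExtend_succ {L : ℕ} (v : Fin L → ℝ) (i : Fin L) :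
    dirichletExtend v (i + 1) = v i := by
  simp [dirichletExtend]

theorem dirichletExtend_of_lt {L : ℕ} (v : Fin L → ℝ) {k : ℕ} (hk : L < k) :
    dirichletExtend v k = 0 := by
  obtain ⟨k, rfl⟩ := Nat.exists_eq_succ_of_ne_zero (Nat.ne_zero_of_lt hk)
  exact dif_neg (by omega)

theorem tridiagonal_mulVec_apply {L : ℕ} {t : ℝ} {W : Fin L → ℝ}
    {A : Matrix (Fin L) (Fin L) ℝ}
    (hA : ∀ i j : Fin L, A i j =
      if (i : ℕ) = (j : ℕ) then 2 * t + W i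
      else if (i : ℕ) + 1 = (j : ℕ) ∨ (j : ℕ) + 1 = (i : ℕ) then -t
      else 0)
    (v : Fin L → ℝ) (i : Fin L) :
    (A *ᵥ v) i = (2 * t + W i) * dirichletExtend v (i + 1) - t * dirichletExtend v i
      - t * dirichletExtend v (i + 2) := by
  have hterm : ∀ j : Fin L, A i j * v j =
      (if (i : ℕ) = j then (2 * t + W i) * dirichletExtend v (j + 1) else 0)
      + (if (i : ℕ) + 1 = j then -t * dirichletExtend v (j + 1) else 0)
      + (if (j : ℕ) + 1 = i then -t * dirichletExtend v (j + 1) else 0) := by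
    intro j
    rw [hA, dirichletExtend_succ]
    split_ifs <;> first | omega | ring
  have hright : ∑ j ∈ Finset.range L,
      (if (i : ℕ) + 1 = j then -t * dirichletExtend v (j + 1) else 0)
      = -t * dirichletExtend v (i + 2) := by
    rw [Finset.sum_ite_eq]
    split_ifs with h
    · rfl
    · rw [Finset.mem_range] at h
      rw [dirichletExtend_of_lt v (by omega), mul_zero]
  have hleft : ∑ j ∈ Finset.range L,
      (if j + 1 = (i : ℕ) then -t * dirichletExtend v (j + 1) else 0)
      = -t * dirichletExtend v i := by
    obtain ⟨k, hk⟩ := i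
    rcases k with _ | k
    · simp [dirichletExtend]
    · simp only [Nat.add_right_cancel_iff]
      rw [Finset.sum_ite_eq', if_pos (Finset.mem_range.2 (by omega))]
  rw [Matrix.mulVec, dotProduct, Finset.sum_congr rfl fun j _ => hterm j,
    Fin.sum_univ_eq_sum_range (fun j =>
      (if (i : ℕ) = j then (2 * t + W i) * dirichletExtend v (j + 1) else 0)
      + (if (i : ℕ) + 1 = j then -t * dirichletExtend v (j + 1) else 0)
      + (if j + 1 = (i : ℕ) then -t * dirichletExtend v (j + 1) else 0)),
    Finset.sum_add_distrib, Finset.sum_add_distrib, hright, hleft, Finset.sum_ite_eq,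
    if_pos (Finset.mem_range.2 i.2)]
  ring

theorem tridiagonal_eq_zero_of_mulVec_nonneg {L : ℕ} {t : ℝ} (ht : 0 < t) {W : Fin L → ℝ}
    (hW : ∀ i, 0 ≤ W i) {A : Matrix (Fin L) (Fin L) ℝ}
    (hA : ∀ i j : Fin L, A i j =
      if (i : ℕ) = (j : ℕ) then 2 * t + W i
      else if (i : ℕ) + 1 = (j : ℕ) ∨ (j : ℕ) + 1 = (i : ℕ) then -t
      else 0)
    {v : Fin L → ℝ} (hv : ∀ i, 0 ≤ (A *ᵥ v) i) {j : Fin L} (hj : v j ≤ 0) : v = 0 := by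
  have hzero := dirichlet_supersolution_eq_zero (L := L) (W := fun k => dirichletExtend W (k + 1))
    (u := dirichletExtend v) ht
    (fun k hk => (hW ⟨k, hk⟩).trans_eq (dirichletExtend_succ W ⟨k, hk⟩).symm)
    rfl (dirichletExtend_of_lt v L.lt_succ_self)
    (fun k hk => by
      have h := hv ⟨k, hk⟩
      rwa [tridiagonal_mulVec_apply hA, ← dirichletExtend_succ W] at h)
    j.2 ((dirichletExtend_succ v j).trans_le hj)
  ext i
  rw [← dirichletExtend_succ v i]
  exact hzero _ (by omega)

/-- If `f ≥ 0` is not identically zero, the Dirichlet solution `v = A⁻¹ f` of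
the discrete Schrödinger equation `(-tΔ_D + W)v = f` is strictly positive at
every interior site. -/
theorem tridiagonal_schrodinger_solution_pos
    (L : ℕ) (hL : 1 ≤ L) (t : ℝ) (ht : 0 < t) (W : Fin L → ℝ)
    (hW : ∀ i, 0 ≤ W i)
    (A : Matrix (Fin L) (Fin L) ℝ)
    (hA : ∀ i j : Fin L, A i j =
      if (i : ℕ) = (j : ℕ) then 2 * t + W i
      else if (i : ℕ) + 1 = (j : ℕ) ∨ (j : ℕ) + 1 = (i : ℕ) then -t
      else 0)
    (f : Fin L → ℝ) (hf : ∀ k, 0 ≤ f k) (hf' : ∃ k₀, 0 < f k₀) :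
    ∀ j, 0 < (A⁻¹ *ᵥ f) j := by
  have hdet : A.det ≠ 0 := by
    intro hdet
    obtain ⟨v, hv, hAv⟩ := Matrix.exists_mulVec_eq_zero_iff.2 hdet
    rcases le_total (v ⟨0, hL⟩) 0 with h | h
    · exact hv (tridiagonal_eq_zero_of_mulVec_nonneg ht hW hA (by simp [hAv]) h)
    · exact hv (neg_eq_zero.1 (tridiagonal_eq_zero_of_mulVec_nonneg ht hW hA
        (v := -v) (j := ⟨0, hL⟩) (by simp [Matrix.mulVec_neg, hAv]) (by simpa using h)))
  have hsol : A *ᵥ (A⁻¹ *ᵥ f) = f := by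
    rw [Matrix.mulVec_mulVec, Matrix.mul_nonsing_inv A hdet.isUnit, Matrix.one_mulVec]
  intro j
  by_contra! hj
  have hzero := tridiagonal_eq_zero_of_mulVec_nonneg ht hW hA (by rwa [hsol]) hj
  obtain ⟨k₀, hk₀⟩ := hf'
  rw [← hsol, hzero, Matrix.mulVec_zero] at hk₀
  exact lt_irrefl _ hk₀
end
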